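/- arXiv:2409.02582 — 2 statements merged into one kernel-verified Lean document; each statement's English description precedes it below -/
import Mathlib

section
/- For all integers p ≥ 1 and t_1 ≥ 1, the list L consisting of p−1 copies of −2, followed by the single entry −(p+3), followed by t_1−1 copies of −2, has negative continued fraction L⁻ = −1 − (1 + t_1 + p·t_1)/(−1 + p + p²·t_1); moreover N(L) = p+3 if t_1 = 1 and N(L) = 2(p+2) if t_1 ≥ 2. (This is the computation for case (d) with t_0 = 1 in the classification.) -/
/-- The negative continued fraction `[r_0, …, r_k]⁻` of a list of rationals:
`[r_k]⁻ = r_k` and `[r_i, …, r_k]⁻ = r_i − 1/[r_{i+1}, …, r_k]⁻`.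
(The value on the empty list is an irrelevant junk value.) -/
def ncf : List ℚ → ℚ
  | [] => 0
  | [r] => r
  | r :: rs => r - 1 / ncf rs

/-- `N([r_0, …, r_k]) = |(r_0+1)(r_1+1)⋯(r_{k−1}+1)·r_k|`, with `N([r]) = |r|`. -/
def Nval : List ℤ → ℤ
  | [] => 1
  | [r] => |r|
  | r :: rs => |r + 1| * Nval rs

/-! Prepending `-2` applies the Möbius map `x ↦ -2 - x⁻¹`, which is parabolic with fixed point
`-1`: writing `x = -1 - u⁻¹`, it becomes the translation `u ↦ u + 1`. Prepending a block of `m`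
entries `-2` therefore shifts `u` by `m`. It leaves `N` unchanged, since `|-2 + 1| = 1`. -/

open List (replicate)

-- For `l = []` the junk values `ncf [] = 0` and `0⁻¹ = 0` give the correct `ncf [r] = r`.
theorem ncf_cons (r : ℚ) (l : List ℚ) : ncf (r :: l) = r - (ncf l)⁻¹ := by
  cases l <;> simp [ncf]

theorem ncf_neg_two_cons {u : ℚ} (hu : 0 < u) {l : List ℚ} (hl : ncf l = -1 - u⁻¹) :
    ncf (-2 :: l) = -1 - (u + 1)⁻¹ := by
  have ncf_eq : ncf l = -((u + 1) / u) := by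
    rw [hl]
    field_simp
    ring
  rw [ncf_cons, ncf_eq, inv_neg, inv_div]
  field_simp
  ring

theorem ncf_replicate_neg_two_append {u : ℚ} (hu : 0 < u) (m : ℕ) {l : List ℚ}
    (hl : ncf l = -1 - u⁻¹) : ncf (replicate m (-2) ++ l) = -1 - (u + m)⁻¹ := by
  induction m with
  | zero => simpa using hl
  | succ m ih =>
    rw [List.replicate_succ, List.cons_append, ncf_neg_two_cons (by positivity) ih, add_assoc,
      Nat.cast_succ]

theorem inv_ncf_replicate_neg_two (n : ℕ) : (ncf (replicate n (-2)))⁻¹ = -(n / (n + 1)) := by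
  induction n with
  | zero => simp [ncf]
  | succ n ih =>
    have ncf_eq : ncf (replicate (n + 1) (-2)) = -((n + 2) / (n + 1)) := by
      rw [List.replicate_succ, ncf_cons, ih]
      field_simp
      ring
    rw [ncf_eq, inv_neg, inv_div]
    push_cast
    ring

theorem ncf_cons_replicate_neg_two (a : ℚ) (n : ℕ) :
    ncf (a :: replicate n (-2)) = a + n / (n + 1) := by
  rw [ncf_cons, inv_ncf_replicate_neg_two, sub_neg_eq_add]

theorem ncf_replicate_neg_two_append_cons_replicate_neg_two {b : ℚ} (hb : 0 ≤ b) (m n : ℕ) :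
    ncf (replicate m (-2) ++ -(b + 2) :: replicate n (-2)) =
      -1 - (b * (n + 1) + 1) / (m * (b * (n + 1) + 1) + (n + 1)) := by
  have tail_eq : ncf (-(b + 2) :: replicate n (-2)) = -1 - ((n + 1) / (b * (n + 1) + 1))⁻¹ := by
    rw [ncf_cons_replicate_neg_two, inv_div]
    field_simp
    ring
  rw [ncf_replicate_neg_two_append (by positivity) m tail_eq]
  field_simp
  ring

theorem Nval_cons (r : ℤ) {l : List ℤ} (hl : l ≠ []) : Nval (r :: l) = |r + 1| * Nval l := by
  cases l with
  | nil => contradiction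
  | cons => rfl

theorem Nval_replicate_neg_two_append (m : ℕ) {l : List ℤ} (hl : l ≠ []) :
    Nval (replicate m (-2) ++ l) = Nval l := by
  induction m with
  | zero => rfl
  | succ m ih =>
    rw [List.replicate_succ, List.cons_append,
      Nval_cons _ (List.append_ne_nil_of_right_ne_nil _ hl), ih]
    norm_num

theorem Nval_replicate_neg_two {n : ℕ} (hn : n ≠ 0) : Nval (replicate n (-2)) = 2 := by
  obtain ⟨k, rfl⟩ := Nat.exists_eq_succ_of_ne_zero hn
  rw [List.replicate_succ', Nval_replicate_neg_two_append k (List.cons_ne_nil _ _)]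
  rfl

theorem Nval_cons_replicate_neg_two (a : ℤ) {n : ℕ} (hn : n ≠ 0) :
    Nval (a :: replicate n (-2)) = 2 * |a + 1| := by
  rw [Nval_cons a (by simpa using hn), Nval_replicate_neg_two hn, mul_comm]

theorem stmt5 (p t1 : ℤ) (hp : 1 ≤ p) (h1 : 1 ≤ t1) :
    ncf ((List.replicate (p - 1).toNat (-2 : ℤ) ++ [-(p + 3)] ++
            List.replicate (t1 - 1).toNat (-2 : ℤ)).map (fun r : ℤ => (r : ℚ))) =
        -1 - (1 + (t1 : ℚ) + (p : ℚ) * t1) / (-1 + (p : ℚ) + (p : ℚ) ^ 2 * t1) ∧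
      (t1 = 1 → Nval (List.replicate (p - 1).toNat (-2 : ℤ) ++ [-(p + 3)] ++
          List.replicate (t1 - 1).toNat (-2 : ℤ)) = p + 3) ∧
      (2 ≤ t1 → Nval (List.replicate (p - 1).toNat (-2 : ℤ) ++ [-(p + 3)] ++
          List.replicate (t1 - 1).toNat (-2 : ℤ)) = 2 * (p + 2)) := by
  rw [List.append_assoc, List.singleton_append,
    Nval_replicate_neg_two_append _ (List.cons_ne_nil _ _)]
  refine ⟨?_, ?_, fun ht => ?_⟩
  · obtain ⟨m, rfl⟩ := Int.le.dest hp
    obtain ⟨n, rfl⟩ := Int.le.dest h1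
    have closed_form := ncf_replicate_neg_two_append_cons_replicate_neg_two
      (b := m + 2) (by positivity) m n
    convert closed_form using 2
    · simp only [add_sub_cancel_left, Int.toNat_natCast, List.map_append, List.map_replicate,
        List.map_cons]
      push_cast
      ring_nf
    · push_cast
      ring
  · rintro rfl
    simp only [sub_self, Int.toNat_zero, List.replicate_zero, Nval]
    rw [abs_neg, abs_of_nonneg (by omega)]
  · rw [Nval_cons_replicate_neg_two _ (by omega), abs_of_neg (by omega)]
    ring
end

section
/- For every integer p ≥ 0, the (p+4)×(p+4) symmetric integer matrix M₁ whose first row is (0, 3, 1, 1, …, 1) and first column is (0, 3, 1, …, 1)ᵗ, and whose lower-right (p+3)×(p+3) block has (1,1)-entry −2, remaining diagonal entries 0, and all off-diagonal entries −1, has determinant 1 + 5p. (This is the determinant of the extended linking matrix of L₁ in case (c2) of the classification.) -/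
/-- The extended linking matrix `M₁` of case (c2): a `(p+4)×(p+4)` symmetric integer
matrix with first row `(0, 3, 1, …, 1)`, first column `(0, 3, 1, …, 1)ᵗ`, and whose
lower-right `(p+3)×(p+3)` block has `(1,1)`-entry `−2`, remaining diagonal entries `0`,
and all off-diagonal entries `−1`. -/
def M1 (p : ℕ) : Matrix (Fin (p + 4)) (Fin (p + 4)) ℤ :=
  Matrix.of fun i j =>
    if (i : ℕ) = 0 then
      (if (j : ℕ) = 0 then 0 else if (j : ℕ) = 1 then 3 else 1)
    else if (j : ℕ) = 0 then
      (if (i : ℕ) = 1 then 3 else 1)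
    else if i = j then (if (i : ℕ) = 1 then -2 else 0)
    else -1

/-!
Apart from an added identity matrix, the entry `M₁ i j` depends only on the classes of `i` and `j`
in the partition `{0}`, `{1}`, `{2, 3, …}` of the indices. By the Weinstein–Aronszajn identity
`det (1 + U V) = det (1 + V U)`, such a determinant collapses to one of size three, in which `p`
enters only through the size `p + 2` of the third class.
-/

open Matrix
open scoped Finset

section BlowUp

variable {n k R : Type*} [DecidableEq k]

theorem submatrix_eq_one_submatrix_mul_mul {l m : Type*} [Fintype k] [Fintype l] [DecidableEq l]
    [NonAssocSemiring R] (B : Matrix k l R) (r : m → k) (c : n → l) :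
    B.submatrix r c =
      (1 : Matrix k k R).submatrix r id * (B * (1 : Matrix l l R).submatrix id c) := by
  have select_columns : B * (1 : Matrix l l R).submatrix id c = B.submatrix id c :=
    mul_submatrix_one (Equiv.refl l) c B
  rw [select_columns]
  exact (one_submatrix_mul r (Equiv.refl k) (B.submatrix id c)).symm

theorem one_submatrix_mul_one_submatrix [Fintype n] [NonAssocSemiring R] (c : n → k) :
    (1 : Matrix k k R).submatrix id c * (1 : Matrix k k R).submatrix c id =
      diagonal fun a => (#{i | c i = a} : R) := by
  ext a b
  obtain rfl | hab := eq_or_ne a b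
  · simp [mul_apply, one_apply, ← ite_and, eq_comm (a := a)]
  · have disjoint_fibers (i : n) : ¬(c i = b ∧ a = c i) := fun ⟨hb, ha⟩ => hab (ha.trans hb)
    simp [mul_apply, one_apply, ← ite_and, disjoint_fibers, hab]

theorem det_one_add_submatrix_self [Fintype n] [Fintype k] [DecidableEq n] [CommRing R]
    (B : Matrix k k R) (c : n → k) :
    (1 + B.submatrix c c).det = (1 + B * diagonal fun a => (#{i | c i = a} : R)).det := by
  rw [submatrix_eq_one_submatrix_mul_mul, det_one_add_mul_comm, Matrix.mul_assoc,
    one_submatrix_mul_one_submatrix]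

end BlowUp

/-- The class of an index of `M1 p` in the partition `{0}`, `{1}`, `{2, 3, …}` along which
`M1 p - 1` is constant. -/
def indexClass (p : ℕ) : Fin (p + 4) → Fin 3 :=
  Fin.cons 0 (Fin.cons 1 fun _ => 2)

/-- The quotient of `M1 p - 1` by the partition `indexClass p`: its values on pairs of classes. -/
def classMatrix : Matrix (Fin 3) (Fin 3) ℤ :=
  !![-1, 3, 1; 3, -3, -1; 1, -1, -1]

theorem card_filter_indexClass_eq (p : ℕ) (a : Fin 3) :
    #{i | indexClass p i = a} = ![1, 1, p + 2] a := by
  rw [Fin.card_filter_univ_succ, Fin.card_filter_univ_succ]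
  fin_cases a <;> simp [indexClass]

theorem M1_eq_one_add_submatrix (p : ℕ) :
    M1 p = 1 + classMatrix.submatrix (indexClass p) (indexClass p) := by
  ext i j
  refine Fin.cases ?_ (Fin.cases ?_ fun i => ?_) i <;>
    refine Fin.cases ?_ (Fin.cases ?_ fun j => ?_) j <;>
    simp [M1, indexClass, classMatrix, one_apply, ite_add, Fin.succ_succ_ne_one,
      (Fin.succ_succ_ne_one _).symm, (Fin.succ_ne_zero _).symm]

theorem one_add_classMatrix_mul_diagonal (x : ℤ) :
    1 + classMatrix * diagonal ![1, 1, x] = !![0, 3, x; 3, -2, -x; 1, -1, 1 - x] := by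
  ext a b
  fin_cases a <;> fin_cases b <;>
    simp [classMatrix, vecMul_diagonal, one_apply, sub_eq_add_neg]

theorem det_one_add_classMatrix_mul_diagonal (x : ℤ) :
    (1 + classMatrix * diagonal ![1, 1, x]).det = 5 * x - 9 := by
  rw [one_add_classMatrix_mul_diagonal, det_fin_three]
  simp only [of_apply, cons_val]
  ring

theorem stmt10 (p : ℕ) : (M1 p).det = 1 + 5 * p := by
  have card_classes : (fun a => (#{i | indexClass p i = a} : ℤ)) = ![1, 1, (p : ℤ) + 2] := by
    ext a
    rw [card_filter_indexClass_eq]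
    fin_cases a <;> simp
  calc (M1 p).det
      = (1 + classMatrix * diagonal ![1, 1, (p : ℤ) + 2]).det := by
        rw [M1_eq_one_add_submatrix, det_one_add_submatrix_self, card_classes]
    _ = 5 * ((p : ℤ) + 2) - 9 := det_one_add_classMatrix_mul_diagonal _
    _ = 1 + 5 * p := by ring
end
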